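/- Let A = B + C be a factorization of a skew left brace A through left ideals B and C. If B and C are both trivial as skew left braces, then Fix(A) is a factorized left ideal of A, i.e., Fix(A) = (Fix(A) ∩ B) + (Fix(A) ∩ C). -/

import Mathlib

/-- A skew left brace: `(A,+)` and `(A,∘)` are groups (sharing the same identity `0`)
such that `a ∘ (b + c) = a ∘ b - a + a ∘ c`.  Here `circ` is the operation `∘` and
`cinv a` is the inverse of `a` in `(A,∘)`. -/
class SkewBrace (A : Type*) extends AddGroup A where
  circ : A → A → A
  cinv : A → A
  circ_assoc : ∀ a b c : A, circ (circ a b) c = circ a (circ b c)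
  zero_circ : ∀ a : A, circ 0 a = a
  circ_zero : ∀ a : A, circ a 0 = a
  cinv_circ : ∀ a : A, circ (cinv a) a = 0
  circ_cinv : ∀ a : A, circ a (cinv a) = 0
  compat : ∀ a b c : A, circ a (b + c) = circ a b + -a + circ a c

open SkewBrace

/-- `lam a b = -a + a ∘ b`. -/
def lam {A : Type*} [SkewBrace A] (a b : A) : A := -a + circ a b

/-- The star operation `a * b = lam a b - b = -a + a ∘ b - b`. -/
def bstar {A : Type*} [SkewBrace A] (a b : A) : A := lam a b - b

/-- `X * Y`: the subgroup of `(A,+)` generated by `{x * y : x ∈ X, y ∈ Y}`. -/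
def starSpan {A : Type*} [SkewBrace A] (X Y : Set A) : AddSubgroup A :=
  AddSubgroup.closure {z | ∃ x ∈ X, ∃ y ∈ Y, z = bstar x y}

/-- The right series of `st`: `rseriesOf st 0 = A = A^(1)` and
`rseriesOf st n = A^(n+1)`, so that `A^(n+1) = A^(n) * A`. -/
def rseriesOf {G : Type*} [AddGroup G] (st : G → G → G) : ℕ → AddSubgroup G
  | 0 => ⊤
  | n + 1 => AddSubgroup.closure {z | ∃ u ∈ rseriesOf st n, ∃ a : G, z = st u a}

/-!
The map `a ↦ λ_a` is an action of `(A, ∘)` on `(A, +)` by automorphisms, so the elements fixing a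
given `z` are closed under `∘`. Since `x + y = x ∘ λ_{x⁻¹}(y)`, an element fixed by `λ_x` for all
`x ∈ B` and all `x ∈ C` lies in `Fix(A)` as soon as `A = B + C` and `C` is stable under `λ`.
Now let `b + c ∈ Fix(A)`. Triviality of `B` says that `B` fixes `b`, hence also `c`; triviality of
`C` says that `C` fixes `c`. So `c ∈ Fix(A)`, and then `b ∈ Fix(A)`.
-/

namespace SkewBrace

variable {A : Type*} [SkewBrace A]

theorem add_lam (a x : A) : a + lam a x = circ a x :=
  add_neg_cancel_left a (circ a x)

theorem lam_eq_self_iff {a x : A} : lam a x = x ↔ a + x = circ a x := by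
  rw [← add_lam, add_right_inj, eq_comm]

theorem lam_add (a x y : A) : lam a (x + y) = lam a x + lam a y := by
  simp only [lam, compat, add_assoc]

theorem zero_lam (x : A) : lam 0 x = x := by
  rw [lam_eq_self_iff, zero_add, zero_circ]

theorem circ_lam (a b x : A) : lam (circ a b) x = lam a (lam b x) := by
  apply add_left_cancel (a := circ a b)
  calc
    circ a b + lam (circ a b) x = circ a (circ b x) := by rw [add_lam, circ_assoc]
    _ = a + lam a (b + lam b x) := by rw [add_lam, add_lam]
    _ = circ a b + lam a (lam b x) := by rw [lam_add, ← add_assoc, add_lam]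

theorem circ_lam_cinv (a x : A) : circ a (lam (cinv a) x) = a + x := by
  rw [← add_lam, ← circ_lam, circ_cinv, zero_lam]

/-- The map `λ_a` as an endomorphism of the additive group. -/
def lamHom (a : A) : A →+ A :=
  AddMonoidHom.mk' (lam a) (lam_add a)

variable (A) in
/-- `Fix(A)`, the set of elements fixed by every `λ_b`, as a subgroup of `(A, +)`. -/
def fix : AddSubgroup A where
  carrier := {a | ∀ b, lam b a = a}
  zero_mem' b := map_zero (lamHom b)
  add_mem' hx hy b := (lam_add b _ _).trans (congrArg₂ (· + ·) (hx b) (hy b))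
  neg_mem' hx b := (map_neg (lamHom b) _).trans (congrArg (- ·) (hx b))

open scoped Pointwise in
theorem mem_fix_of_add_eq_univ {B C : Set A} {z : A} (hfact : B + C = Set.univ)
    (hC : ∀ a, ∀ x ∈ C, lam a x ∈ C) (hBz : ∀ x ∈ B, lam x z = z)
    (hCz : ∀ x ∈ C, lam x z = z) : z ∈ fix A := by
  intro a
  obtain ⟨x, hx, y, hy, rfl⟩ : a ∈ B + C := hfact ▸ Set.mem_univ a
  calc
    lam (x + y) z = lam x (lam (lam (cinv x) y) z) := by rw [← circ_lam, circ_lam_cinv]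
    _ = z := by rw [hCz _ (hC _ y hy), hBz x hx]

end SkewBrace

open scoped Pointwise in
theorem stmt13_general {A : Type*} [SkewBrace A] {B C : Set A} (hfact : B + C = Set.univ)
    (hC : ∀ a, ∀ x ∈ C, lam a x ∈ C) (hBtriv : ∀ x ∈ B, ∀ y ∈ B, x + y = circ x y)
    (hCtriv : ∀ x ∈ C, ∀ y ∈ C, x + y = circ x y) :
    (fix A : Set A) = (fix A : Set A) ∩ B + (fix A : Set A) ∩ C := by
  apply Set.Subset.antisymm
  · intro t ht
    obtain ⟨b, hb, c, hc, rfl⟩ : t ∈ B + C := hfact ▸ Set.mem_univ t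
    have hBc : ∀ x ∈ B, lam x c = c := fun x hx ↦ by
      have hxb : lam x b = b := lam_eq_self_iff.2 (hBtriv x hx b hb)
      simpa only [lam_add, hxb, add_right_inj] using ht x
    have hCc : ∀ x ∈ C, lam x c = c := fun x hx ↦ lam_eq_self_iff.2 (hCtriv x hx c hc)
    have hc_fix : c ∈ fix A := mem_fix_of_add_eq_univ hfact hC hBc hCc
    have hb_fix : b ∈ fix A := (add_mem_cancel_right hc_fix).1 ht
    exact Set.add_mem_add ⟨hb_fix, hb⟩ ⟨hc_fix, hc⟩
  · rintro _ ⟨x, ⟨hx, -⟩, y, ⟨hy, -⟩, rfl⟩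
    exact add_mem hx hy

/-- if `A = B + C` through left ideals trivial as skew braces, then
`Fix(A) = {a | lam b a = a for all b}` is factorized:
`Fix(A) = (Fix(A) ∩ B) + (Fix(A) ∩ C)`. -/
theorem stmt13 {A : Type*} [SkewBrace A] (B C : AddSubgroup A)
    (hB : ∀ a : A, ∀ x ∈ B, lam a x ∈ B)
    (hC : ∀ a : A, ∀ x ∈ C, lam a x ∈ C)
    (hBtriv : ∀ x ∈ B, ∀ y ∈ B, x + y = circ x y)
    (hCtriv : ∀ x ∈ C, ∀ y ∈ C, x + y = circ x y)
    (hfact : ∀ a : A, ∃ b ∈ B, ∃ c ∈ C, a = b + c) :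
    {a : A | ∀ b : A, lam b a = a} =
      {t : A | ∃ x ∈ {a : A | ∀ b : A, lam b a = a} ∩ (B : Set A),
               ∃ y ∈ {a : A | ∀ b : A, lam b a = a} ∩ (C : Set A), t = x + y} := by
  simp only [eq_comm (b := _ + _)] at hfact ⊢
  exact stmt13_general (Set.eq_univ_of_forall hfact) hC hBtriv hCtriv
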